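/- arXiv:math-ph/0603028 — 2 statements merged into one kernel-verified Lean document; each statement's English description precedes it below -/
import Mathlib

section
/- Reconstruction theorem (coordinate form): Let (φ,Φ) be a local morphism from the local Lie algebroid data (ρ,C) on ℝ^n with fiber ℝ^m to the local Lie algebroid data (ρ',C') on ℝ^{n'} with fiber ℝ^{m'}. Let L' : ℝ^{n'} × ℝ^{m'} → ℝ be C² and L(x,y) := L'(φ(x), Φ(x)y). Let (x,y) : [t₀,t₁] → ℝ^n × ℝ^m be an admissible C¹ curve. If the image curve (φ ∘ x, t ↦ Φ(x(t)) y(t)) is a solution of Lagrange's equations for L', then (x,y) itself is a solution of Lagrange's equations for L. -/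
/-!
Pulling back along the bundle map `(φ, Φ)` pulls back the Euler–Lagrange expression: along an
admissible curve `EL_α(L) = Σ_β EL_β(L') Φ^β_α`, the right side being taken along the image curve
(`LocalMorphism.ELexpr_comp_bundleMap`). Indeed let `ρ_α` be the `α`-th column of `ρ`, and put
`p_b = ∂L'/∂y'^b`, `q_k = ∂L'/∂x'^k`. By the chain rule `∂L/∂y^α = Σ_b p_b Φ^b_α`, while the
derivative of `L` in the direction `(ρ_α, 0)` is `Σ_k q_k dφ^k(ρ_α) + Σ_{b,δ} p_b dΦ^b_δ(ρ_α) y^δ`.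
The velocity of `x` being `ρ y`, the terms of `EL_α(L)` proportional to `p_b` add up to
`dΦ^b_α(ρ y) - Σ_δ dΦ^b_δ(ρ_α) y^δ + Σ_{γ,δ} Φ^b_γ C^γ_{αδ} y^δ`, which the morphism condition
contracted with `y` turns into `Σ_{β,ε} C'^b_{βε} Φ^β_α (Φ y)^ε`; and the admissibility condition
replaces `dφ(ρ_α)` by `Σ_β ρ'_β Φ^β_α`.
-/

open Set

/-- Partial derivative of a scalar function on `ℝ^n` in the `j`-th coordinate direction. -/
noncomputable def pderiv' {n : ℕ} (f : (Fin n → ℝ) → ℝ) (x : Fin n → ℝ) (j : Fin n) : ℝ :=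
  deriv (fun s => f (Function.update x j s)) (x j)

/-- Local Lie algebroid data on `ℝ^n` with fiber `ℝ^m`: smooth anchor coefficients
`ρ^i_α` and smooth structure functions `C^α_{βγ}`, antisymmetric in the lower indices. -/
structure LocalAlgebroidData (n m : ℕ) where
  ρ : (Fin n → ℝ) → Fin n → Fin m → ℝ
  C : (Fin n → ℝ) → Fin m → Fin m → Fin m → ℝ
  smooth_ρ : ContDiff ℝ (⊤ : ℕ∞) ρ
  smooth_C : ContDiff ℝ (⊤ : ℕ∞) C
  antisymm : ∀ x α β γ, C x α β γ = - C x α γ β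

/-- Partial derivative `∂L/∂x^i` of a Lagrangian `L : ℝ^n × ℝ^m → ℝ`. -/
noncomputable def pLx {n m : ℕ} (L : (Fin n → ℝ) × (Fin m → ℝ) → ℝ)
    (x : Fin n → ℝ) (y : Fin m → ℝ) (i : Fin n) : ℝ :=
  pderiv' (fun z => L (z, y)) x i

/-- Partial derivative `∂L/∂y^α` of a Lagrangian `L : ℝ^n × ℝ^m → ℝ`. -/
noncomputable def pLy {n m : ℕ} (L : (Fin n → ℝ) × (Fin m → ℝ) → ℝ)
    (x : Fin n → ℝ) (y : Fin m → ℝ) (α : Fin m) : ℝ :=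
  pderiv' (fun w => L (x, w)) y α

/-- The Euler–Lagrange expression
`EL_α(t) = d/dt[∂L/∂y^α] + Σ_{β,γ} C^γ_{αβ} y^β ∂L/∂y^γ − Σ_i ρ^i_α ∂L/∂x^i`
of a curve `(x,y)`. -/
noncomputable def ELexpr {n m : ℕ} (A : LocalAlgebroidData n m)
    (L : (Fin n → ℝ) × (Fin m → ℝ) → ℝ)
    (x : ℝ → Fin n → ℝ) (y : ℝ → Fin m → ℝ) (α : Fin m) (t : ℝ) : ℝ :=
  deriv (fun s => pLy L (x s) (y s) α) t
    + ∑ β, ∑ γ, A.C (x t) γ α β * y t β * pLy L (x t) (y t) γ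
    - ∑ i, A.ρ (x t) i α * pLx L (x t) (y t) i

/-- The curve `(x,y)` is admissible on `[t₀,t₁]`: `(x^i)' = Σ_α ρ^i_α(x) y^α`. -/
def IsAdmissible {n m : ℕ} (A : LocalAlgebroidData n m) (t₀ t₁ : ℝ)
    (x : ℝ → Fin n → ℝ) (y : ℝ → Fin m → ℝ) : Prop :=
  ∀ t ∈ Icc t₀ t₁, ∀ i, deriv (fun s => x s i) t = ∑ α, A.ρ (x t) i α * y t α

/-- `(x,y)` is a solution of Lagrange's equations for `L` on `[t₀,t₁]`. -/
def IsLagrangeSolution {n m : ℕ} (A : LocalAlgebroidData n m)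
    (L : (Fin n → ℝ) × (Fin m → ℝ) → ℝ) (t₀ t₁ : ℝ)
    (x : ℝ → Fin n → ℝ) (y : ℝ → Fin m → ℝ) : Prop :=
  ∀ α, ∀ t ∈ Icc t₀ t₁,
    deriv (fun s => pLy L (x s) (y s) α) t
        + ∑ β, ∑ γ, A.C (x t) γ α β * y t β * pLy L (x t) (y t) γ
      = ∑ i, A.ρ (x t) i α * pLx L (x t) (y t) i

/-- A local morphism of local Lie algebroid data: a pair of smooth maps `(φ, Φ)`
satisfying the admissibility and morphism conditions. -/
structure LocalMorphism {n m n' m' : ℕ}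
    (A : LocalAlgebroidData n m) (A' : LocalAlgebroidData n' m') where
  φ : (Fin n → ℝ) → Fin n' → ℝ
  Φ : (Fin n → ℝ) → Fin m' → Fin m → ℝ
  smooth_φ : ContDiff ℝ (⊤ : ℕ∞) φ
  smooth_Φ : ContDiff ℝ (⊤ : ℕ∞) Φ
  adm : ∀ x (k : Fin n') (α : Fin m),
    ∑ i, pderiv' (fun z => φ z k) x i * A.ρ x i α
      = ∑ β, A'.ρ (φ x) k β * Φ x β α
  morph : ∀ x (α : Fin m') (μ ν : Fin m),
    (∑ i, (A.ρ x i ν * pderiv' (fun z => Φ z α μ) x i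
            - A.ρ x i μ * pderiv' (fun z => Φ z α ν) x i))
      + (∑ β, Φ x α β * A.C x β μ ν)
      - (∑ β, ∑ γ, A'.C (φ x) α β γ * Φ x β μ * Φ x γ ν) = 0

section CoefficientArrays

variable {k m : ℕ}

/-- The vector `M v` for an array `M` of coefficients. The arrays are bare functions rather than
`Matrix`, on which there is no global norm, because they get differentiated. -/
def applyCoeffs (M : Fin k → Fin m → ℝ) (v : Fin m → ℝ) : Fin k → ℝ := fun i => ∑ j, M i j * v j

lemma isBilinearMap_applyCoeffs : IsBilinearMap ℝ (applyCoeffs (k := k) (m := m)) where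
  add_left _ _ _ := by ext; simp [applyCoeffs, add_mul, Finset.sum_add_distrib]
  smul_left _ _ _ := by ext; simp [applyCoeffs, Finset.mul_sum, mul_assoc]
  add_right _ _ _ := by ext; simp [applyCoeffs, mul_add, Finset.sum_add_distrib]
  smul_right _ _ _ := by ext; simp [applyCoeffs, Finset.mul_sum, mul_left_comm]

lemma applyCoeffs_zero_left (v : Fin m → ℝ) : applyCoeffs (0 : Fin k → Fin m → ℝ) v = 0 := by
  ext
  simp [applyCoeffs]

lemma applyCoeffs_zero_right (M : Fin k → Fin m → ℝ) : applyCoeffs M 0 = 0 := by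
  ext
  simp [applyCoeffs]

lemma applyCoeffs_single_one (M : Fin k → Fin m → ℝ) (j : Fin m) :
    applyCoeffs M (Pi.single j 1) = fun i => M i j := by
  ext i
  simp [applyCoeffs, Pi.single_apply]

lemma applyCoeffs_eq_sum_smul (M : Fin k → Fin m → ℝ) (v : Fin m → ℝ) :
    applyCoeffs M v = ∑ j, v j • fun i => M i j := by
  ext i
  simp [applyCoeffs, mul_comm]

end CoefficientArrays

section PartialDerivatives

variable {n m : ℕ}

lemma pderiv'_eq_of_hasFDerivAt {f : (Fin n → ℝ) → ℝ} {f' : (Fin n → ℝ) →L[ℝ] ℝ} {x : Fin n → ℝ}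
    (hf : HasFDerivAt f f' x) (j : Fin n) : pderiv' f x j = f' (Pi.single j 1) := by
  have hf_update : HasFDerivAt f f' (Function.update x j (x j)) := by
    rwa [Function.update_eq_self]
  exact (hf_update.comp_hasDerivAt (x j) (hasDerivAt_update x j (x j))).deriv

lemma sum_pderiv'_mul {f : (Fin n → ℝ) → ℝ} {f' : (Fin n → ℝ) →L[ℝ] ℝ} {x : Fin n → ℝ}
    (hf : HasFDerivAt f f' x) (v : Fin n → ℝ) : ∑ i, pderiv' f x i * v i = f' v := by
  conv_rhs => rw [pi_eq_sum_univ' v, map_sum]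
  refine Finset.sum_congr rfl fun i _ => ?_
  rw [map_smul, smul_eq_mul, mul_comm, pderiv'_eq_of_hasFDerivAt hf]

variable {L : (Fin n → ℝ) × (Fin m → ℝ) → ℝ} {x : Fin n → ℝ} {y : Fin m → ℝ}

lemma sum_pLx_mul (hL : DifferentiableAt ℝ L (x, y)) (v : Fin n → ℝ) :
    ∑ i, pLx L x y i * v i = fderiv ℝ L (x, y) (v, 0) :=
  sum_pderiv'_mul (hL.hasFDerivAt.comp x (hasFDerivAt_prodMk_left x y)) v

lemma sum_pLy_mul (hL : DifferentiableAt ℝ L (x, y)) (w : Fin m → ℝ) :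
    ∑ α, pLy L x y α * w α = fderiv ℝ L (x, y) (0, w) :=
  sum_pderiv'_mul (hL.hasFDerivAt.comp y (hasFDerivAt_prodMk_right x y)) w

lemma pLy_eq_fderiv (hL : DifferentiableAt ℝ L (x, y)) (α : Fin m) :
    pLy L x y α = fderiv ℝ L (x, y) (0, Pi.single α 1) :=
  pderiv'_eq_of_hasFDerivAt (hL.hasFDerivAt.comp y (hasFDerivAt_prodMk_right x y)) α

lemma fderiv_eq_sum_pLx_add_sum_pLy (hL : DifferentiableAt ℝ L (x, y))
    (v : Fin n → ℝ) (w : Fin m → ℝ) :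
    fderiv ℝ L (x, y) (v, w) = ∑ i, pLx L x y i * v i + ∑ α, pLy L x y α * w α := by
  rw [sum_pLx_mul hL, sum_pLy_mul hL, ← map_add, Prod.mk_add_mk, add_zero, zero_add]

lemma differentiable_pLy (hL : ContDiff ℝ 2 L) (α : Fin m) :
    Differentiable ℝ (fun p : (Fin n → ℝ) × (Fin m → ℝ) => pLy L p.1 p.2 α) := by
  have hfderiv : Differentiable ℝ (fderiv ℝ L) :=
    (hL.fderiv_right (m := 1) one_add_one_eq_two.le).differentiable one_ne_zero
  have hpLy (p : (Fin n → ℝ) × (Fin m → ℝ)) :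
      pLy L p.1 p.2 α = fderiv ℝ L p (0, Pi.single α 1) :=
    pLy_eq_fderiv (hL.differentiable two_ne_zero p) α
  simpa only [hpLy] using hfderiv.clm_apply (differentiable_const _)

end PartialDerivatives

section BundleMap

variable {n m n' m' : ℕ}

/-- The vector bundle map `(x, y) ↦ (φ(x), Φ(x) y)`, along which Lagrangians are pulled back. -/
def bundleMap (φ : (Fin n → ℝ) → Fin n' → ℝ) (Φ : (Fin n → ℝ) → Fin m' → Fin m → ℝ)
    (p : (Fin n → ℝ) × (Fin m → ℝ)) : (Fin n' → ℝ) × (Fin m' → ℝ) :=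
  (φ p.1, applyCoeffs (Φ p.1) p.2)

variable {φ : (Fin n → ℝ) → Fin n' → ℝ} {Φ : (Fin n → ℝ) → Fin m' → Fin m → ℝ}
  {x : Fin n → ℝ} {y : Fin m → ℝ}

lemma differentiableAt_bundleMap (hφ : DifferentiableAt ℝ φ x) (hΦ : DifferentiableAt ℝ Φ x) :
    DifferentiableAt ℝ (bundleMap φ Φ) (x, y) := by
  have hfst : DifferentiableAt ℝ (Prod.fst : (Fin n → ℝ) × (Fin m → ℝ) → Fin n → ℝ) (x, y) :=
    differentiableAt_fst
  have hcoeffs : Differentiable ℝ fun q : (Fin m' → Fin m → ℝ) × (Fin m → ℝ) =>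
      applyCoeffs q.1 q.2 := by
    unfold applyCoeffs
    fun_prop
  exact (hφ.comp (x, y) hfst).prodMk <|
    (hcoeffs _).comp (x, y) ((hΦ.comp (x, y) hfst).prodMk differentiableAt_snd)

lemma fderiv_bundleMap (hφ : DifferentiableAt ℝ φ x) (hΦ : DifferentiableAt ℝ Φ x)
    (v : Fin n → ℝ) (w : Fin m → ℝ) :
    fderiv ℝ (bundleMap φ Φ) (x, y) (v, w)
      = (fderiv ℝ φ x v, applyCoeffs (Φ x) w + applyCoeffs (fderiv ℝ Φ x v) y) := by
  have hφ_fst : HasFDerivAt (fun p : (Fin n → ℝ) × (Fin m → ℝ) => φ p.1) _ (x, y) :=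
    hφ.hasFDerivAt.comp (x, y) hasFDerivAt_fst
  have hΦ_fst : HasFDerivAt (fun p : (Fin n → ℝ) × (Fin m → ℝ) => Φ p.1) _ (x, y) :=
    hΦ.hasFDerivAt.comp (x, y) hasFDerivAt_fst
  have hfiber := isBilinearMap_applyCoeffs.toContinuousBilinearMap.hasFDerivAt_of_bilinear
    hΦ_fst (hasFDerivAt_snd (𝕜 := ℝ) (p := (x, y)))
  have hbundle : HasFDerivAt (bundleMap φ Φ) _ (x, y) := hφ_fst.prodMk hfiber
  rw [hbundle.fderiv]
  rfl

variable {L' : (Fin n' → ℝ) × (Fin m' → ℝ) → ℝ}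

lemma fderiv_comp_bundleMap (hL' : DifferentiableAt ℝ L' (bundleMap φ Φ (x, y)))
    (hφ : DifferentiableAt ℝ φ x) (hΦ : DifferentiableAt ℝ Φ x) (v : Fin n → ℝ) (w : Fin m → ℝ) :
    fderiv ℝ (L' ∘ bundleMap φ Φ) (x, y) (v, w)
      = ∑ k, pLx L' (φ x) (applyCoeffs (Φ x) y) k * fderiv ℝ φ x v k
        + ∑ b, pLy L' (φ x) (applyCoeffs (Φ x) y) b
            * (applyCoeffs (Φ x) w + applyCoeffs (fderiv ℝ Φ x v) y) b := by
  rw [fderiv_comp _ hL' (differentiableAt_bundleMap hφ hΦ), ContinuousLinearMap.comp_apply,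
    fderiv_bundleMap hφ hΦ]
  exact fderiv_eq_sum_pLx_add_sum_pLy hL' _ _

lemma sum_pLx_comp_bundleMap_mul (hL' : DifferentiableAt ℝ L' (bundleMap φ Φ (x, y)))
    (hφ : DifferentiableAt ℝ φ x) (hΦ : DifferentiableAt ℝ Φ x) (v : Fin n → ℝ) :
    ∑ i, pLx (L' ∘ bundleMap φ Φ) x y i * v i
      = ∑ k, pLx L' (φ x) (applyCoeffs (Φ x) y) k * fderiv ℝ φ x v k
        + ∑ b, pLy L' (φ x) (applyCoeffs (Φ x) y) b * applyCoeffs (fderiv ℝ Φ x v) y b := by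
  rw [sum_pLx_mul (hL'.comp _ (differentiableAt_bundleMap hφ hΦ)),
    fderiv_comp_bundleMap hL' hφ hΦ, applyCoeffs_zero_right, zero_add]

lemma pLy_comp_bundleMap (hL' : DifferentiableAt ℝ L' (bundleMap φ Φ (x, y)))
    (hφ : DifferentiableAt ℝ φ x) (hΦ : DifferentiableAt ℝ Φ x) (α : Fin m) :
    pLy (L' ∘ bundleMap φ Φ) x y α
      = ∑ b, pLy L' (φ x) (applyCoeffs (Φ x) y) b * Φ x b α := by
  rw [pLy_eq_fderiv (hL'.comp _ (differentiableAt_bundleMap hφ hΦ)),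
    fderiv_comp_bundleMap hL' hφ hΦ]
  simp [applyCoeffs_single_one, applyCoeffs_zero_left]

section Curve

variable {x : ℝ → Fin n → ℝ} {y : ℝ → Fin m → ℝ}

lemma hasDerivAt_pLy_comp_bundleMap (hL' : Differentiable ℝ L') (hφ : Differentiable ℝ φ)
    (hΦ : Differentiable ℝ Φ) {v : Fin n → ℝ} {t : ℝ} (hx : HasDerivAt x v t)
    (hmomenta : ∀ β, DifferentiableAt ℝ
      (fun s => pLy L' (φ (x s)) (applyCoeffs (Φ (x s)) (y s)) β) t) (α : Fin m) :
    HasDerivAt (fun s => pLy (L' ∘ bundleMap φ Φ) (x s) (y s) α)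
      (∑ β, (deriv (fun s => pLy L' (φ (x s)) (applyCoeffs (Φ (x s)) (y s)) β) t * Φ (x t) β α
        + pLy L' (φ (x t)) (applyCoeffs (Φ (x t)) (y t)) β * fderiv ℝ Φ (x t) v β α)) t := by
  have hΦx (β : Fin m') : HasDerivAt (fun s => Φ (x s) β α) (fderiv ℝ Φ (x t) v β α) t :=
    hasDerivAt_pi.1 (hasDerivAt_pi.1 ((hΦ (x t)).hasFDerivAt.comp_hasDerivAt t hx) β) α
  simp only [pLy_comp_bundleMap (hL' _) (hφ _) (hΦ _)]
  exact HasDerivAt.fun_sum fun β _ => (hmomenta β).hasDerivAt.mul (hΦx β)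

lemma differentiable_pLy_bundleMap_curve (hL' : ContDiff ℝ 2 L') (hφ : Differentiable ℝ φ)
    (hΦ : Differentiable ℝ Φ) (hx : Differentiable ℝ x) (hy : Differentiable ℝ y) (β : Fin m') :
    Differentiable ℝ (fun s => pLy L' (φ (x s)) (applyCoeffs (Φ (x s)) (y s)) β) :=
  have hbundle : Differentiable ℝ (bundleMap φ Φ) := fun p =>
    differentiableAt_bundleMap (hφ p.1) (hΦ p.1)
  (differentiable_pLy hL' β).comp (hbundle.comp (hx.prodMk hy))

end Curve

end BundleMap

namespace LocalMorphism

variable {n m n' m' : ℕ} {A : LocalAlgebroidData n m} {A' : LocalAlgebroidData n' m'}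
  (F : LocalMorphism A A')

lemma differentiable_φ : Differentiable ℝ F.φ :=
  F.smooth_φ.differentiable (by simp)

lemma differentiable_Φ : Differentiable ℝ F.Φ :=
  F.smooth_Φ.differentiable (by simp)

lemma fderiv_φ_ρ (x : Fin n → ℝ) (α : Fin m) (k : Fin n') :
    fderiv ℝ F.φ x (fun i => A.ρ x i α) k = ∑ β, A'.ρ (F.φ x) k β * F.Φ x β α := by
  rw [← F.adm, sum_pderiv'_mul (hasFDerivAt_pi'.1 (F.differentiable_φ x).hasFDerivAt k)]
  rfl

lemma sum_pderiv'_Φ_mul (x v : Fin n → ℝ) (b : Fin m') (μ : Fin m) :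
    ∑ i, pderiv' (fun z => F.Φ z b μ) x i * v i = fderiv ℝ F.Φ x v b μ :=
  sum_pderiv'_mul
    (hasFDerivAt_pi'.1 (hasFDerivAt_pi'.1 (F.differentiable_Φ x).hasFDerivAt b) μ) v

lemma fderiv_Φ_ρ_add (x : Fin n → ℝ) (b : Fin m') (μ ν : Fin m) :
    fderiv ℝ F.Φ x (fun i => A.ρ x i ν) b μ + ∑ γ, F.Φ x b γ * A.C x γ μ ν
      = fderiv ℝ F.Φ x (fun i => A.ρ x i μ) b ν
        + ∑ β, ∑ ε, A'.C (F.φ x) b β ε * F.Φ x β μ * F.Φ x ε ν := by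
  have hmorph := F.morph x b μ ν
  simp only [mul_comm (A.ρ x _ _), Finset.sum_sub_distrib, sum_pderiv'_Φ_mul] at hmorph
  linarith

lemma fderiv_Φ_applyCoeffs_ρ_add (x : Fin n → ℝ) (y : Fin m → ℝ) (b : Fin m') (μ : Fin m) :
    fderiv ℝ F.Φ x (applyCoeffs (A.ρ x) y) b μ + ∑ δ, ∑ γ, A.C x γ μ δ * y δ * F.Φ x b γ
      = applyCoeffs (fderiv ℝ F.Φ x (fun i => A.ρ x i μ)) y b
        + ∑ β, ∑ ε, A'.C (F.φ x) b β ε * applyCoeffs (F.Φ x) y ε * F.Φ x β μ := by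
  have hρ : fderiv ℝ F.Φ x (applyCoeffs (A.ρ x) y) b μ
      = ∑ δ, fderiv ℝ F.Φ x (fun i => A.ρ x i δ) b μ * y δ := by
    simp [applyCoeffs_eq_sum_smul, mul_comm]
  have hC : ∑ δ, ∑ γ, A.C x γ μ δ * y δ * F.Φ x b γ
      = ∑ δ, (∑ γ, F.Φ x b γ * A.C x γ μ δ) * y δ := by
    simp only [Finset.sum_mul]
    congr! 2
    ring
  have hC' : ∑ β, ∑ ε, A'.C (F.φ x) b β ε * applyCoeffs (F.Φ x) y ε * F.Φ x β μ
      = ∑ δ, (∑ β, ∑ ε, A'.C (F.φ x) b β ε * F.Φ x β μ * F.Φ x ε δ) * y δ := by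
    simp only [applyCoeffs, Finset.mul_sum, Finset.sum_mul]
    rw [Finset.sum_comm_cycle]
    congr! 3
    ring
  rw [hρ, hC, hC', applyCoeffs, ← Finset.sum_add_distrib, ← Finset.sum_add_distrib]
  simp only [← add_mul, fderiv_Φ_ρ_add]

lemma sum_mul_fderiv_Φ_applyCoeffs_ρ_add (x : Fin n → ℝ) (y : Fin m → ℝ) (p : Fin m' → ℝ)
    (μ : Fin m) :
    ∑ b, p b * fderiv ℝ F.Φ x (applyCoeffs (A.ρ x) y) b μ
        + ∑ δ, ∑ γ, A.C x γ μ δ * y δ * ∑ b, p b * F.Φ x b γ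
      = ∑ b, p b * applyCoeffs (fderiv ℝ F.Φ x (fun i => A.ρ x i μ)) y b
        + ∑ β, (∑ ε, ∑ b, A'.C (F.φ x) b β ε * applyCoeffs (F.Φ x) y ε * p b) * F.Φ x β μ := by
  have hC : ∑ δ, ∑ γ, A.C x γ μ δ * y δ * ∑ b, p b * F.Φ x b γ
      = ∑ b, p b * ∑ δ, ∑ γ, A.C x γ μ δ * y δ * F.Φ x b γ := by
    simp only [Finset.mul_sum]
    rw [Finset.sum_comm_cycle]
    congr! 3
    ring
  have hC' : ∑ β, (∑ ε, ∑ b, A'.C (F.φ x) b β ε * applyCoeffs (F.Φ x) y ε * p b) * F.Φ x β μ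
      = ∑ b, p b * ∑ β, ∑ ε, A'.C (F.φ x) b β ε * applyCoeffs (F.Φ x) y ε * F.Φ x β μ := by
    simp only [Finset.mul_sum, Finset.sum_mul]
    rw [Finset.sum_comm_cycle]
    congr! 3
    ring
  rw [hC, hC', ← Finset.sum_add_distrib, ← Finset.sum_add_distrib]
  simp only [← mul_add, fderiv_Φ_applyCoeffs_ρ_add]

lemma sum_ρ_mul_pLx_comp_bundleMap {L' : (Fin n' → ℝ) × (Fin m' → ℝ) → ℝ} {x : Fin n → ℝ}
    {y : Fin m → ℝ} (hL' : DifferentiableAt ℝ L' (bundleMap F.φ F.Φ (x, y))) (α : Fin m) :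
    ∑ i, A.ρ x i α * pLx (L' ∘ bundleMap F.φ F.Φ) x y i
      = ∑ β, (∑ k, A'.ρ (F.φ x) k β * pLx L' (F.φ x) (applyCoeffs (F.Φ x) y) k) * F.Φ x β α
        + ∑ b, pLy L' (F.φ x) (applyCoeffs (F.Φ x) y) b
          * applyCoeffs (fderiv ℝ F.Φ x (fun i => A.ρ x i α)) y b := by
  simp only [mul_comm (A.ρ x _ _)]
  rw [sum_pLx_comp_bundleMap_mul hL' (F.differentiable_φ x) (F.differentiable_Φ x)]
  congr 1
  simp only [fderiv_φ_ρ, Finset.mul_sum, Finset.sum_mul]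
  rw [Finset.sum_comm]
  congr! 2
  ring

variable {L' : (Fin n' → ℝ) × (Fin m' → ℝ) → ℝ} {x : ℝ → Fin n → ℝ} {y : ℝ → Fin m → ℝ} {t : ℝ}

theorem ELexpr_comp_bundleMap (hL' : Differentiable ℝ L')
    (hx : HasDerivAt x (applyCoeffs (A.ρ (x t)) (y t)) t)
    (hmomenta : ∀ β, DifferentiableAt ℝ
      (fun s => pLy L' (F.φ (x s)) (applyCoeffs (F.Φ (x s)) (y s)) β) t) (α : Fin m) :
    ELexpr A (L' ∘ bundleMap F.φ F.Φ) x y α t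
      = ∑ β, ELexpr A' L' (fun s => F.φ (x s)) (fun s => applyCoeffs (F.Φ (x s)) (y s)) β t
          * F.Φ (x t) β α := by
  have hpairing := F.sum_mul_fderiv_Φ_applyCoeffs_ρ_add (x t) (y t)
    (pLy L' (F.φ (x t)) (applyCoeffs (F.Φ (x t)) (y t))) α
  rw [ELexpr,
    (hasDerivAt_pLy_comp_bundleMap hL' F.differentiable_φ F.differentiable_Φ hx hmomenta α).deriv,
    F.sum_ρ_mul_pLx_comp_bundleMap (hL' _)]
  simp only [pLy_comp_bundleMap (hL' _) (F.differentiable_φ _) (F.differentiable_Φ _), ELexpr,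
    sub_mul, add_mul, Finset.sum_sub_distrib, Finset.sum_add_distrib]
  linarith

end LocalMorphism

lemma isLagrangeSolution_iff_ELexpr_eq_zero {n m : ℕ} {A : LocalAlgebroidData n m}
    {L : (Fin n → ℝ) × (Fin m → ℝ) → ℝ} {t₀ t₁ : ℝ} {x : ℝ → Fin n → ℝ} {y : ℝ → Fin m → ℝ} :
    IsLagrangeSolution A L t₀ t₁ x y ↔ ∀ α, ∀ t ∈ Icc t₀ t₁, ELexpr A L x y α t = 0 := by
  simp only [IsLagrangeSolution, ELexpr, sub_eq_zero]

lemma IsAdmissible.hasDerivAt {n m : ℕ} {A : LocalAlgebroidData n m} {t₀ t₁ t : ℝ}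
    {x : ℝ → Fin n → ℝ} {y : ℝ → Fin m → ℝ} (hadm : IsAdmissible A t₀ t₁ x y)
    (ht : t ∈ Icc t₀ t₁) (hx : DifferentiableAt ℝ x t) :
    HasDerivAt x (applyCoeffs (A.ρ (x t)) (y t)) t := by
  refine hasDerivAt_pi.2 fun i => ?_
  rw [applyCoeffs, ← hadm t ht i]
  exact (differentiableAt_pi.1 hx i).hasDerivAt

theorem reconstruction_of_lagrange_equations_general
    {n m n' m' : ℕ} {A : LocalAlgebroidData n m} {A' : LocalAlgebroidData n' m'}
    (F : LocalMorphism A A')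
    {L' : (Fin n' → ℝ) × (Fin m' → ℝ) → ℝ} (hL' : Differentiable ℝ L')
    {t₀ t₁ : ℝ} {x : ℝ → Fin n → ℝ} {y : ℝ → Fin m → ℝ}
    (hx : ∀ t ∈ Icc t₀ t₁, DifferentiableAt ℝ x t)
    (hmomenta : ∀ β, ∀ t ∈ Icc t₀ t₁, DifferentiableAt ℝ
      (fun s => pLy L' (F.φ (x s)) (applyCoeffs (F.Φ (x s)) (y s)) β) t)
    (hadm : IsAdmissible A t₀ t₁ x y)
    (hsol' : IsLagrangeSolution A' L' t₀ t₁ (fun t => F.φ (x t))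
      (fun t => applyCoeffs (F.Φ (x t)) (y t))) :
    IsLagrangeSolution A (L' ∘ bundleMap F.φ F.Φ) t₀ t₁ x y := by
  rw [isLagrangeSolution_iff_ELexpr_eq_zero] at hsol' ⊢
  intro α t ht
  rw [F.ELexpr_comp_bundleMap hL' (hadm.hasDerivAt ht (hx t ht)) fun β => hmomenta β t ht]
  simp only [hsol' _ t ht, zero_mul, Finset.sum_const_zero]

/-- **Reconstruction theorem (coordinate form).**  Let `(φ,Φ)` be a local morphism of
Lie algebroid data and `L = L' ∘ (φ,Φ)`.  If `(x,y)` is an admissible C¹ curve whose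
image curve `(φ∘x, Φ(x)y)` solves Lagrange's equations for `L'`, then `(x,y)` itself
solves Lagrange's equations for `L`. -/
theorem reconstruction_of_lagrange_equations
    {n m n' m' : ℕ} {A : LocalAlgebroidData n m} {A' : LocalAlgebroidData n' m'}
    (F : LocalMorphism A A')
    (L' : (Fin n' → ℝ) × (Fin m' → ℝ) → ℝ) (hL' : ContDiff ℝ 2 L')
    (t₀ t₁ : ℝ) (ht : t₀ < t₁)
    (x : ℝ → Fin n → ℝ) (y : ℝ → Fin m → ℝ)
    (hx : ContDiff ℝ 1 x) (hy : ContDiff ℝ 1 y)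
    (hadm : IsAdmissible A t₀ t₁ x y)
    (hsol' : IsLagrangeSolution A' L' t₀ t₁ (fun t => F.φ (x t))
      (fun t β => ∑ α, F.Φ (x t) β α * y t α)) :
    IsLagrangeSolution A
      (fun p => L' (F.φ p.1, fun β => ∑ δ, F.Φ p.1 β δ * p.2 δ)) t₀ t₁ x y := by
  exact reconstruction_of_lagrange_equations_general F (hL'.differentiable two_ne_zero)
    (fun t _ => hx.differentiable one_ne_zero t)
    (fun β t _ => differentiable_pLy_bundleMap_curve hL' F.differentiable_φ F.differentiable_Φ
      (hx.differentiable one_ne_zero) (hy.differentiable one_ne_zero) β t) hadm hsol'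
end

section
/- Morphisms map admissible variations to admissible variations (coordinate form): Let (φ,Φ) be a local morphism from the local Lie algebroid data (ρ,C) on ℝ^n with fiber ℝ^m to the local Lie algebroid data (ρ',C') on ℝ^{n'} with fiber ℝ^{m'}. Let (x,a) : [t₀,t₁] → ℝ^n × ℝ^m be an admissible C¹ curve and σ : [t₀,t₁] → ℝ^m a C¹ map. Then for every α and every t ∈ [t₀,t₁]: Σ_{i,β,ν} ∂Φ^α_β/∂x^i(x(t)) ρ^i_ν(x(t)) σ^ν(t) a^β(t) + Σ_β Φ^α_β(x(t)) ( (σ^β)'(t) + Σ_{μ,ν} C^β_{μν}(x(t)) a^μ(t) σ^ν(t) ) = d/dt[ Σ_β Φ^α_β(x(t)) σ^β(t) ] + Σ_{β,γ} C'^α_{βγ}(φ(x(t))) (Φ(x(t))a(t))^β (Φ(x(t))σ(t))^γ. (That is, the tangent map of Φ sends the admissible variation Ξ_{(x,a)}(σ), with components (Σ_α ρ^i_α σ^α ; (σ^α)' + Σ_{β,γ} C^α_{βγ} a^β σ^γ), to the admissible variation Ξ of the image curve along the image section.) -/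
/-!
By the chain rule, the derivative of a row `Φ^α` along an admissible curve is `J(ρ a)`, where `J` is
the Jacobian of `Φ^α`; hence `d/dt (Φ^α · σ) = J(ρ a) · σ + Φ^α · σ'`. The claim replaces
`J(ρ a) · σ` by `a · J(ρ σ)`, that is, the matrix `(J ρ)ᵀ` by `J ρ`. The morphism condition, read as
a matrix equation in `(μ, ν)`, says that these differ by exactly the two structure-function terms,
so evaluating it on the pair of vectors `(a, σ)` finishes the proof.
-/

open Set

section ChainRule

variable {n : ℕ}

lemma pderiv'_eq_fderiv {f : (Fin n → ℝ) → ℝ} {x : Fin n → ℝ}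
    (hf : DifferentiableAt ℝ f x) (i : Fin n) :
    pderiv' f x i = fderiv ℝ f x (Pi.single i 1) := by
  have hf' : HasFDerivAt f (fderiv ℝ f x) (Function.update x i (x i)) := by
    rw [Function.update_eq_self]
    exact hf.hasFDerivAt
  exact (hf'.comp_hasDerivAt (x i) (hasDerivAt_update x i (x i))).deriv

lemma fderiv_apply_eq_sum_pderiv' {f : (Fin n → ℝ) → ℝ} {x : Fin n → ℝ}
    (hf : DifferentiableAt ℝ f x) (v : Fin n → ℝ) :
    fderiv ℝ f x v = ∑ i, pderiv' f x i * v i := by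
  conv_lhs => rw [pi_eq_sum_univ' v]
  simp only [map_sum, map_smul, smul_eq_mul, pderiv'_eq_fderiv hf, mul_comm]

open Matrix

/-- The Jacobian matrix `(∂f^β/∂x^i)` of a map `f : ℝ^n → ℝ^κ`, with rows indexed by `β`. -/
noncomputable def jacobian {κ : Type*} (f : (Fin n → ℝ) → κ → ℝ) (x : Fin n → ℝ) :
    Matrix κ (Fin n) ℝ :=
  of fun β i => pderiv' (fun z => f z β) x i

lemma jacobian_apply {κ : Type*} (f : (Fin n → ℝ) → κ → ℝ) (x : Fin n → ℝ) (β : κ) (i : Fin n) :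
    jacobian f x β i = pderiv' (fun z => f z β) x i :=
  rfl

lemma hasDerivAt_comp_jacobian {κ : Type*} {f : (Fin n → ℝ) → κ → ℝ} {x : ℝ → Fin n → ℝ}
    {x' : Fin n → ℝ} {t : ℝ} (hf : DifferentiableAt ℝ f (x t)) (hx : HasDerivAt x x' t) :
    HasDerivAt (fun s => f (x s)) (jacobian f (x t) *ᵥ x') t := by
  refine hasDerivAt_pi.2 fun β => ?_
  have hfβ : DifferentiableAt ℝ (fun z => f z β) (x t) := differentiableAt_pi.1 hf β
  have hcomp := hfβ.hasFDerivAt.comp_hasDerivAt t hx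
  rwa [fderiv_apply_eq_sum_pderiv' hfβ] at hcomp

lemma hasDerivAt_dotProduct {𝕜 κ : Type*} [NontriviallyNormedField 𝕜] [Fintype κ]
    {f g : 𝕜 → κ → 𝕜} {f' g' : κ → 𝕜} {t : 𝕜}
    (hf : HasDerivAt f f' t) (hg : HasDerivAt g g' t) :
    HasDerivAt (fun s => f s ⬝ᵥ g s) (f' ⬝ᵥ g t + f t ⬝ᵥ g') t := by
  simp only [dotProduct, ← Finset.sum_add_distrib]
  exact HasDerivAt.fun_sum fun β _ => (hasDerivAt_pi.1 hf β).mul (hasDerivAt_pi.1 hg β)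

end ChainRule

section Contraction

open Matrix

variable {R ι κ κ' τ : Type*} [Fintype ι] [Fintype κ'] [Fintype τ]

lemma transpose_mul_mul_apply_eq_sum [CommSemiring R] (Φ : Matrix κ' κ R) (M : Matrix κ' κ' R)
    (μ ν : κ) :
    (Φᵀ * M * Φ) μ ν = ∑ β, ∑ γ, M β γ * Φ β μ * Φ γ ν := by
  rw [Matrix.mul_assoc, mul_apply]
  simp only [mul_apply, Finset.mul_sum, transpose_apply]
  exact Finset.sum_congr rfl fun β _ => Finset.sum_congr rfl fun γ _ => by ring

variable [Fintype κ]

lemma dotProduct_mulVec_eq_sum [CommSemiring R] (M : Matrix κ κ' R) (u : κ → R) (v : κ' → R) :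
    u ⬝ᵥ M *ᵥ v = ∑ μ, ∑ ν, M μ ν * u μ * v ν := by
  simp only [dotProduct, mulVec, Finset.mul_sum]
  exact Finset.sum_congr rfl fun μ _ => Finset.sum_congr rfl fun ν _ => by ring

lemma dotProduct_mul_mulVec_eq_sum [CommSemiring R] (M : Matrix κ ι R) (N : Matrix ι κ' R)
    (u : κ → R) (v : κ' → R) :
    u ⬝ᵥ (M * N) *ᵥ v = ∑ i, ∑ μ, ∑ ν, M μ i * N i ν * v ν * u μ := by
  rw [← mulVec_mulVec, dotProduct_mulVec]
  simp only [dotProduct, vecMul, mulVec, Finset.sum_mul_sum]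
  exact Finset.sum_congr rfl fun i _ => Finset.sum_congr rfl fun μ _ =>
    Finset.sum_congr rfl fun ν _ => by ring

lemma contract_morphism_condition [CommRing R] {M : Matrix κ κ R} {f : τ → R}
    {C : τ → Matrix κ κ R} {Φ : Matrix κ' κ R} {C' : Matrix κ' κ' R}
    (h : M - Mᵀ + ∑ β, f β • C β - Φᵀ * C' * Φ = 0) (u v : κ → R) :
    u ⬝ᵥ M *ᵥ v + ∑ β, f β * (u ⬝ᵥ C β *ᵥ v)
      = M *ᵥ u ⬝ᵥ v + Φ *ᵥ u ⬝ᵥ C' *ᵥ (Φ *ᵥ v) := by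
  have huv : u ⬝ᵥ (M - Mᵀ + ∑ β, f β • C β - Φᵀ * C' * Φ) *ᵥ v = 0 := by
    rw [h, zero_mulVec, dotProduct_zero]
  have hM : u ⬝ᵥ Mᵀ *ᵥ v = M *ᵥ u ⬝ᵥ v := by
    rw [dotProduct_mulVec, vecMul_transpose]
  have hΦ : u ⬝ᵥ (Φᵀ * C' * Φ) *ᵥ v = Φ *ᵥ u ⬝ᵥ C' *ᵥ (Φ *ᵥ v) := by
    rw [← mulVec_mulVec, ← mulVec_mulVec, dotProduct_mulVec, vecMul_transpose]
  have hC : u ⬝ᵥ (∑ β, f β • C β) *ᵥ v = ∑ β, f β * (u ⬝ᵥ C β *ᵥ v) := by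
    simp only [sum_mulVec, smul_mulVec, dotProduct_sum, dotProduct_smul, smul_eq_mul]
  rw [sub_mulVec, add_mulVec, sub_mulVec, dotProduct_sub, dotProduct_add, dotProduct_sub,
    hM, hΦ, hC] at huv
  linear_combination huv

lemma contract_morphism_condition_sum [CommRing R] {J : Matrix κ ι R} {ρ : Matrix ι κ R}
    {f : τ → R} {C : τ → Matrix κ κ R} {Φ : Matrix κ' κ R} {C' : Matrix κ' κ' R}
    (h : ∀ μ ν, (∑ i, (ρ i ν * J μ i - ρ i μ * J ν i)) + (∑ β, f β * C β μ ν)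
      - (∑ β, ∑ γ, C' β γ * Φ β μ * Φ γ ν) = 0) (u v : κ → R) :
    (∑ i, ∑ μ, ∑ ν, J μ i * ρ i ν * v ν * u μ) + ∑ β, f β * ∑ μ, ∑ ν, C β μ ν * u μ * v ν
      = J *ᵥ (ρ *ᵥ u) ⬝ᵥ v
        + ∑ β, ∑ γ, C' β γ * (∑ δ, Φ β δ * u δ) * (∑ δ, Φ γ δ * v δ) := by
  have hmatrix : J * ρ - (J * ρ)ᵀ + ∑ β, f β • C β - Φᵀ * C' * Φ = 0 := by
    ext μ ν
    rw [Matrix.sub_apply, transpose_mul_mul_apply_eq_sum, Matrix.zero_apply, ← h μ ν]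
    simp only [Matrix.add_apply, Matrix.sub_apply, Matrix.sum_apply, Matrix.smul_apply,
      transpose_apply, mul_apply, smul_eq_mul, Finset.sum_sub_distrib, mul_comm]
  have hcontract := contract_morphism_condition hmatrix u v
  rw [dotProduct_mul_mulVec_eq_sum, dotProduct_mulVec_eq_sum C', ← mulVec_mulVec] at hcontract
  simp only [dotProduct_mulVec_eq_sum] at hcontract
  exact hcontract

end Contraction

open Matrix in
/-- `ρ` and `C` are the values of the anchor and structure functions at `x t`, and `C'` is the
`α`-component `C'^α_{βγ}` of the target structure functions at `φ (x t)`. -/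
theorem morphism_maps_variations_to_variations_general
    {n : ℕ} {κ κ' : Type*} [Fintype κ] [Fintype κ']
    {ρ : Fin n → κ → ℝ} {C : κ → κ → κ → ℝ} {C' : κ' → κ' → ℝ}
    {Φ : (Fin n → ℝ) → κ' → κ → ℝ} {α : κ'}
    {x : ℝ → Fin n → ℝ} {σ : ℝ → κ → ℝ} {a σ' : κ → ℝ} {t : ℝ}
    (hΦ : DifferentiableAt ℝ (fun z => Φ z α) (x t))
    (hmorph : ∀ μ ν,
      (∑ i, (ρ i ν * pderiv' (fun z => Φ z α μ) (x t) i
              - ρ i μ * pderiv' (fun z => Φ z α ν) (x t) i))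
        + (∑ β, Φ (x t) α β * C β μ ν)
        - (∑ β, ∑ γ, C' β γ * Φ (x t) β μ * Φ (x t) γ ν) = 0)
    (hx : HasDerivAt x (fun i => ∑ μ, ρ i μ * a μ) t)
    (hσ : HasDerivAt σ σ' t) :
    HasDerivAt (fun s => ∑ β, Φ (x s) α β * σ s β)
      ((∑ i, ∑ β, ∑ ν, pderiv' (fun z => Φ z α β) (x t) i * ρ i ν * σ t ν * a β)
        + ∑ β, Φ (x t) α β * (σ' β + ∑ μ, ∑ ν, C β μ ν * a μ * σ t ν)
        - ∑ β, ∑ γ, C' β γ * (∑ δ, Φ (x t) β δ * a δ) * (∑ δ, Φ (x t) γ δ * σ t δ)) t := by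
  have hcontract := contract_morphism_condition_sum (J := jacobian (fun z => Φ z α) (x t))
    hmorph a (σ t)
  simp only [jacobian_apply] at hcontract
  have hsplit : ∑ β, Φ (x t) α β * (σ' β + ∑ μ, ∑ ν, C β μ ν * a μ * σ t ν)
      = Φ (x t) α ⬝ᵥ σ' + ∑ β, Φ (x t) α β * ∑ μ, ∑ ν, C β μ ν * a μ * σ t ν := by
    simp only [mul_add, Finset.sum_add_distrib, dotProduct]
  have hx' : HasDerivAt x (ρ *ᵥ a) t := hx
  refine (hasDerivAt_dotProduct (hasDerivAt_comp_jacobian hΦ hx') hσ).congr_deriv ?_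
  rw [hsplit]
  linear_combination -hcontract

/-- **Morphisms map admissible variations to admissible variations (coordinate form).**
For a local morphism `(φ,Φ)`, an admissible C¹ curve `(x,a)` and a C¹ map `σ`, the
tangent map of `Φ` sends the admissible variation `Ξ_{(x,a)}(σ)` to the admissible
variation of the image curve along the image section. -/
theorem morphism_maps_variations_to_variations
    {n m n' m' : ℕ} {A : LocalAlgebroidData n m} {A' : LocalAlgebroidData n' m'}
    (F : LocalMorphism A A')
    (t₀ t₁ : ℝ) (ht : t₀ < t₁)
    (x : ℝ → Fin n → ℝ) (a : ℝ → Fin m → ℝ)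
    (hx : ContDiff ℝ 1 x) (ha : ContDiff ℝ 1 a)
    (hadm : IsAdmissible A t₀ t₁ x a)
    (σ : ℝ → Fin m → ℝ) (hσ : ContDiff ℝ 1 σ) :
    ∀ (α : Fin m'), ∀ t ∈ Icc t₀ t₁,
      (∑ i, ∑ β, ∑ ν,
          pderiv' (fun z => F.Φ z α β) (x t) i * A.ρ (x t) i ν * σ t ν * a t β)
        + ∑ β, F.Φ (x t) α β *
            (deriv (fun s => σ s β) t
              + ∑ μ, ∑ ν, A.C (x t) β μ ν * a t μ * σ t ν)
      = deriv (fun s => ∑ β, F.Φ (x s) α β * σ s β) t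
        + ∑ β, ∑ γ, A'.C (F.φ (x t)) α β γ
            * (∑ δ, F.Φ (x t) β δ * a t δ) * (∑ δ, F.Φ (x t) γ δ * σ t δ) := by
  intro α t htI
  have hx_t : HasDerivAt x (fun i => ∑ μ, A.ρ (x t) i μ * a t μ) t := hasDerivAt_pi.2 fun i =>
    hadm t htI i ▸ (differentiableAt_pi.1 (hx.differentiable one_ne_zero t) i).hasDerivAt
  have hσ_t : HasDerivAt σ (fun β => deriv (fun s => σ s β) t) t := hasDerivAt_pi.2 fun β =>
    (differentiableAt_pi.1 (hσ.differentiable one_ne_zero t) β).hasDerivAt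
  have hΦ_t : DifferentiableAt ℝ (fun z => F.Φ z α) (x t) :=
    differentiableAt_pi.1 (F.smooth_Φ.differentiable (by simp) (x t)) α
  rw [(morphism_maps_variations_to_variations_general hΦ_t (F.morph (x t) α) hx_t hσ_t).deriv,
    sub_add_cancel]
end
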